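/- Let N ⊆ E be a locally closed subset, let p ∈ N be locally rigid with respect to N, and let ψ be a symplectic homeomorphism of E. Then ψ(p) is locally rigid with respect to ψ(N). (Invariance of local rigidity under symplectic homeomorphisms, in the standard symplectic vector space.) -/

import Mathlib

/-!
The symplectic homeomorphism `ψ` is a limit of symplectomorphisms `Ψ m`. Take a witness `W` of the
local rigidity of `p`; then `ψ '' W` witnesses the local rigidity of `ψ p`. Suppose a
neighborhood `U'` of `ψ p` in `ψ '' W` could be displaced from `ψ '' N` in `ψ '' W` at arbitrarily
small cost, and fix a relatively compact neighborhood `U` of `p` with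
`closure U ⊆ W ∩ ψ ⁻¹' U'`. For a Hamiltonian `H` of small norm whose time-one map `φ` displaces
`U'`, the map `ψ⁻¹ ∘ φ ∘ ψ` sends the compact set `closure U` into the open set `W \ N`.
For large `m` two things follow from compactness: `(Ψ m)⁻¹ ∘ φ ∘ Ψ m` still sends `closure U` into
`W \ N` (`eventually_forall_mem`), and the pulled back Hamiltonian `H (t, Ψ m z)` has support in
`[0,1] × W`. Pulling back by a symplectomorphism conjugates the flow (`IsHamFlow.pullback`) and
preserves the norm (`HNorm_pullback`), so `U` is displaced from `N ∩ W` in `W` at the same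
small cost, against the rigidity of `p`.

That `φ` is continuous and preserves `ψ '' W` comes from Grönwall's inequality and ODE uniqueness,
as the Hamiltonian vector field is globally Lipschitz.
-/

open scoped ENNReal Topology

noncomputable section

/-- The standard symplectic vector space `E = ℝⁿ × ℝⁿ`. -/
abbrev E (n : ℕ) := (Fin n → ℝ) × (Fin n → ℝ)

/-- The standard symplectic form `ω₀((x,y),(x',y')) = ⟨x,y'⟩ − ⟨y,x'⟩`. -/
def omega0 (n : ℕ) (z w : E n) : ℝ :=
  (∑ i, z.1 i * w.2 i) - ∑ i, z.2 i * w.1 i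

/-- The Hamiltonian vector field `X_{H_t}(x,y) = (∂_y H(t,x,y), −∂_x H(t,x,y))`. -/
def XH (n : ℕ) (H : ℝ × E n → ℝ) (t : ℝ) (z : E n) : E n :=
  ((fun i => fderiv ℝ (fun w => H (t, w)) z (0, Pi.single i 1)),
   (fun i => -fderiv ℝ (fun w => H (t, w)) z (Pi.single i 1, 0)))

/-- `Φ` is the Hamiltonian flow of `H`: `Φ 0 = id` and `(d/dt) Φ t z = X_{H_t} (Φ t z)`. -/
def IsHamFlow (n : ℕ) (H : ℝ × E n → ℝ) (Φ : ℝ → E n → E n) : Prop :=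
  (∀ z, Φ 0 z = z) ∧ ∀ z t, HasDerivAt (fun s => Φ s z) (XH n H t (Φ t z)) t

/-- `H : ℝ × E → ℝ` is smooth with support a compact subset of `[0,1] × W`. -/
def AdmissibleH (n : ℕ) (W : Set (E n)) (H : ℝ × E n → ℝ) : Prop :=
  ContDiff ℝ (⊤ : ℕ∞) H ∧ IsCompact (tsupport H) ∧
    tsupport H ⊆ Set.Icc (0 : ℝ) 1 ×ˢ W

/-- `Ham(W)`: time-one maps of Hamiltonian flows of admissible Hamiltonians. -/
def HamGrp (n : ℕ) (W : Set (E n)) : Set (E n → E n) :=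
  {φ | ∃ H Φ, AdmissibleH n W H ∧ IsHamFlow n H Φ ∧ φ = Φ 1}

/-- `‖H‖ = ∫₀¹ (sup H(t,·) − inf H(t,·)) dt`. -/
def HNorm (n : ℕ) (H : ℝ × E n → ℝ) : ℝ :=
  ∫ t in (0:ℝ)..(1:ℝ),
    (sSup (Set.range fun z => H (t, z)) - sInf (Set.range fun z => H (t, z)))

/-- The Hofer norm `‖φ‖_W` of `φ ∈ Ham(W)`. -/
def hoferNorm (n : ℕ) (W : Set (E n)) (φ : E n → E n) : ℝ :=
  sInf {c | ∃ H Φ, AdmissibleH n W H ∧ IsHamFlow n H Φ ∧ φ = Φ 1 ∧ c = HNorm n H}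

/-- The displacement energy `e_W(U,N)`, valued in `ℝ≥0∞` (so `inf ∅ = ⊤`).
`closure U ∩ W` is the closure of `U` in `W`. -/
def dispE (n : ℕ) (W U N : Set (E n)) : ℝ≥0∞ :=
  sInf {c | ∃ φ ∈ HamGrp n W, φ '' (closure U ∩ W) ∩ N = ∅ ∧
    c = ENNReal.ofReal (hoferNorm n W φ)}

/-- `p` is rigid with respect to `N` in `W`. -/
def RigidWrt (n : ℕ) (W N : Set (E n)) (p : E n) : Prop :=
  ∀ U : Set (E n), IsOpen U → p ∈ U → U ⊆ W → 0 < dispE n W U N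

/-- `N` is a subset of `W` which is closed as a subset of `W`. -/
def ClosedIn (n : ℕ) (W N : Set (E n)) : Prop :=
  N ⊆ W ∧ closure N ∩ W ⊆ N

/-- `N` is locally closed. -/
def LocallyClosedSet (n : ℕ) (N : Set (E n)) : Prop :=
  ∀ q ∈ N, ∃ V : Set (E n), IsOpen V ∧ q ∈ V ∧ ClosedIn n V (N ∩ V)

/-- `p` is locally rigid with respect to `N`. -/
def LocRigid (n : ℕ) (N : Set (E n)) (p : E n) : Prop :=
  ∃ W : Set (E n), IsOpen W ∧ p ∈ W ∧ ClosedIn n W (N ∩ W) ∧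
    RigidWrt n W (N ∩ W) p

/-- `ψ` is a symplectomorphism from the open set `W` onto its (open) image. -/
def IsSymplecto (n : ℕ) (W : Set (E n)) (ψ : E n → E n) : Prop :=
  IsOpen W ∧ IsOpen (ψ '' W) ∧ Set.InjOn ψ W ∧ ContDiffOn ℝ (⊤ : ℕ∞) ψ W ∧
  (∃ g : E n → E n, ContDiffOn ℝ (⊤ : ℕ∞) g (ψ '' W) ∧ ∀ z ∈ W, g (ψ z) = z) ∧
  ∀ z ∈ W, ∀ u v, omega0 n (fderiv ℝ ψ z u) (fderiv ℝ ψ z v) = omega0 n u v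

/-- `ψ` is a symplectic homeomorphism of `E`: a homeomorphism which is a `C⁰`-limit
(uniformly on compact sets, together with inverses) of symplectomorphisms of `E` onto `E`. -/
def IsSympHomeo (n : ℕ) (ψ : E n ≃ₜ E n) : Prop :=
  ∃ Ψ : ℕ → E n ≃ E n,
    (∀ m, IsSymplecto n Set.univ (Ψ m)) ∧
    TendstoLocallyUniformly (fun m z => Ψ m z) (fun z => ψ z) Filter.atTop ∧
    TendstoLocallyUniformly (fun m z => (Ψ m).symm z) (fun z => ψ.symm z) Filter.atTop

/-- A fixed `k`-dimensional coordinate subspace `ℝᵏ × {0}` of `E`. -/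
def coordSubspace (n k : ℕ) : Set (E n) :=
  {z | (∀ i : Fin n, k ≤ (i : ℕ) → z.1 i = 0) ∧
       (∀ i : Fin n, k ≤ n + (i : ℕ) → z.2 i = 0)}

/-- `N` is a smooth `k`-dimensional submanifold of `E`. -/
def IsSubmanifold (n k : ℕ) (N : Set (E n)) : Prop :=
  ∀ p ∈ N, ∃ (V : Set (E n)) (Φ : E n → E n),
    IsOpen V ∧ p ∈ V ∧ IsOpen (Φ '' V) ∧ Set.InjOn Φ V ∧
    ContDiffOn ℝ (⊤ : ℕ∞) Φ V ∧
    (∃ g : E n → E n, ContDiffOn ℝ (⊤ : ℕ∞) g (Φ '' V) ∧ ∀ z ∈ V, g (Φ z) = z) ∧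
    Φ '' (N ∩ V) = coordSubspace n k ∩ Φ '' V

/-- The tangent space `T_pN`, as velocities of curves through `p` lying locally in `N`. -/
def TangentSet (n : ℕ) (N : Set (E n)) (p : E n) : Set (E n) :=
  {v | ∃ γ : ℝ → E n, γ 0 = p ∧ (∀ᶠ t in 𝓝 (0:ℝ), γ t ∈ N) ∧ HasDerivAt γ v 0}

/-- The symplectic orthogonal complement `T^{ω₀}`. -/
def symplOrth (n : ℕ) (T : Set (E n)) : Set (E n) :=
  {v | ∀ u ∈ T, omega0 n v u = 0}

/-- `N` is coisotropic: `(T_pN)^{ω₀} ⊆ T_pN` for all `p ∈ N`. -/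
def IsCoisotropic (n : ℕ) (N : Set (E n)) : Prop :=
  ∀ p ∈ N, symplOrth n (TangentSet n N p) ⊆ TangentSet n N p

/-- `N` is Lagrangian: `(T_pN)^{ω₀} = T_pN` for all `p ∈ N`. -/
def IsLagrangian (n : ℕ) (N : Set (E n)) : Prop :=
  ∀ p ∈ N, symplOrth n (TangentSet n N p) = TangentSet n N p

/-- `Σ_N`: Hamiltonian diffeomorphisms preserving `N`. -/
def SigmaGrp (n : ℕ) (N : Set (E n)) : Set (E n → E n) :=
  {φ | φ ∈ HamGrp n Set.univ ∧ φ '' N = N}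

/-- `Σ̄_N`: the closure of `Σ_N` in the Hofer metric. -/
def SigmaBar (n : ℕ) (N : Set (E n)) : Set (E n → E n) :=
  {φ | φ ∈ HamGrp n Set.univ ∧ ∀ ε : ℝ, 0 < ε →
    ∃ ψ ∈ SigmaGrp n N, ∃ χ : E n → E n,
      Function.LeftInverse χ ψ ∧ Function.RightInverse χ ψ ∧
      hoferNorm n Set.univ (χ ∘ φ) < ε}

/-- The rigid locus `R_N = ⋂_{φ ∈ Σ̄_N} φ⁻¹(N)`. -/
def rigidLocus (n : ℕ) (N : Set (E n)) : Set (E n) :=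
  ⋂ φ ∈ SigmaBar n N, φ ⁻¹' N

/-! ### The Hamiltonian vector field -/

theorem XH_eq_fderiv (n : ℕ) {H : ℝ × E n → ℝ} (hH : ContDiff ℝ (⊤ : ℕ∞) H) (t : ℝ) (z : E n) :
    XH n H t z = ((fun i => fderiv ℝ H (t, z) (0, (0, Pi.single i 1))),
      (fun i => -fderiv ℝ H (t, z) (0, (Pi.single i 1, 0)))) := by
  have hd : HasFDerivAt (fun w => H (t, w))
      ((fderiv ℝ H (t, z)).comp (ContinuousLinearMap.inr ℝ ℝ (E n))) z := by
    have h1 : HasFDerivAt H (fderiv ℝ H (t, z)) (t, z) :=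
      ((hH.differentiable (by simp)) (t, z)).hasFDerivAt
    exact h1.comp z (hasFDerivAt_prodMk_right t z)
  simp [XH, hd.fderiv]

theorem XH_eq_zero (n : ℕ) {H : ℝ × E n → ℝ} (hH : ContDiff ℝ (⊤ : ℕ∞) H) {t : ℝ} {z : E n}
    (hz : (t, z) ∉ tsupport H) : XH n H t z = 0 := by
  have h0 : fderiv ℝ H (t, z) = 0 := by
    by_contra h
    exact hz (support_fderiv_subset ℝ h)
  rw [XH_eq_fderiv n hH, h0]
  ext <;> simp

theorem XH_lipschitz (n : ℕ) {W : Set (E n)} {H : ℝ × E n → ℝ} (hH : AdmissibleH n W H) :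
    ∃ C : NNReal, ∀ t, LipschitzWith C (XH n H t) := by
  have hc : HasCompactSupport (fun q : ℝ × E n => XH n H q.1 q.2) :=
    HasCompactSupport.intro hH.2.1 fun q hq => XH_eq_zero n hH.1 hq
  have hs : ContDiff ℝ 1 (fun q : ℝ × E n => XH n H q.1 q.2) := by
    have hf : ContDiff ℝ 1 (fderiv ℝ H) :=
      (contDiff_infty.1 hH.1 2).fderiv_right (by norm_num)
    have he : (fun q : ℝ × E n => XH n H q.1 q.2) = fun q =>
        ((fun i => fderiv ℝ H q (0, (0, Pi.single i 1))),
          (fun i => -fderiv ℝ H q (0, (Pi.single i 1, 0)))) :=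
      funext fun q => XH_eq_fderiv n hH.1 q.1 q.2
    rw [he]
    exact (contDiff_pi.2 fun i => hf.clm_apply contDiff_const).prodMk
      (contDiff_pi.2 fun i => (hf.clm_apply contDiff_const).neg)
  obtain ⟨C, hC⟩ := hs.lipschitzWith_of_hasCompactSupport hc (by simp)
  refine ⟨C, fun t => LipschitzWith.of_dist_le_mul fun x y => ?_⟩
  simpa [Prod.dist_eq] using hC.dist_le_mul (t, x) (t, y)

/-! ### Continuity of the flow and invariance of the supporting set -/

theorem IsHamFlow.continuous_one {n : ℕ} {W : Set (E n)} {H : ℝ × E n → ℝ} {Φ : ℝ → E n → E n}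
    (hH : AdmissibleH n W H) (hΦ : IsHamFlow n H Φ) : Continuous (Φ 1) := by
  obtain ⟨C, hC⟩ := XH_lipschitz n hH
  have key : LipschitzWith (Real.toNNReal (Real.exp (C * (1 - 0)))) (Φ 1) := by
    refine LipschitzWith.of_dist_le_mul fun x y => ?_
    have h := dist_le_of_trajectories_ODE (v := XH n H) (K := C) (f := fun s => Φ s x)
      (g := fun s => Φ s y) (a := 0) (b := 1) (δ := dist x y)
      hC
      (fun t _ => (hΦ.2 x t).continuousAt.continuousWithinAt)
      (fun t _ => (hΦ.2 x t).hasDerivWithinAt)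
      (fun t _ => (hΦ.2 y t).continuousAt.continuousWithinAt)
      (fun t _ => (hΦ.2 y t).hasDerivWithinAt)
      (by simp [hΦ.1]) 1 (by simp)
    rw [Real.coe_toNNReal _ (Real.exp_pos _).le, mul_comm]
    exact h
  exact key.continuous

/-- A point outside `W` is an equilibrium, so no trajectory starting in `W` reaches it. -/
theorem IsHamFlow.mapsTo_one {n : ℕ} {W : Set (E n)} {H : ℝ × E n → ℝ} {Φ : ℝ → E n → E n}
    (hH : AdmissibleH n W H) (hΦ : IsHamFlow n H Φ) : Set.MapsTo (Φ 1) W W := by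
  intro z hz
  by_contra hout
  obtain ⟨C, hC⟩ := XH_lipschitz n hH
  have h := ODE_solution_unique_univ (v := XH n H) (s := fun _ => Set.univ) (K := C)
    (f := fun s => Φ s z) (g := fun _ => Φ 1 z) (t₀ := 1)
    (fun t => (hC t).lipschitzOnWith)
    (fun t => ⟨hΦ.2 z t, trivial⟩)
    (fun t => ⟨by
      rw [XH_eq_zero n hH.1 fun hmem => hout (hH.2.2 hmem).2]
      exact hasDerivAt_const t _, trivial⟩) rfl
  have h0 := congrFun h 0
  simp only [hΦ.1] at h0
  exact hout (h0 ▸ hz)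

/-! ### Pulling back Hamiltonians by symplectomorphisms -/

theorem omega0_XH (n : ℕ) (H : ℝ × E n → ℝ) (t : ℝ) (z v : E n) :
    omega0 n (XH n H t z) v = fderiv ℝ (fun w => H (t, w)) z v := by
  set D := fderiv ℝ (fun w => H (t, w)) z with hD
  have h1 : v = (∑ i, v.1 i • ((Pi.single i 1, 0) : E n))
      + ∑ i, v.2 i • ((0, Pi.single i 1) : E n) := by
    ext j <;> simp [Prod.fst_sum, Prod.snd_sum, Finset.sum_apply, Pi.single_apply]
  conv_rhs => rw [h1]
  simp only [map_add, map_sum, map_smul, smul_eq_mul, omega0, XH, ← hD, neg_mul,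
    Finset.sum_neg_distrib, sub_neg_eq_add]
  rw [add_comm]
  congr 1 <;> exact Finset.sum_congr rfl fun i _ => mul_comm _ _

theorem omega0_nondegenerate (n : ℕ) {a b : E n} (h : ∀ v, omega0 n a v = omega0 n b v) :
    a = b := by
  ext i
  · simpa [omega0, Pi.single_apply] using h (0, Pi.single i 1)
  · simpa [omega0, Pi.single_apply] using h (Pi.single i 1, 0)

theorem IsSymplecto.contDiff {n : ℕ} {f : E n ≃ E n} (hf : IsSymplecto n Set.univ f) :
    ContDiff ℝ (⊤ : ℕ∞) f := contDiffOn_univ.1 hf.2.2.2.1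

theorem IsSymplecto.contDiff_symm {n : ℕ} {f : E n ≃ E n} (hf : IsSymplecto n Set.univ f) :
    ContDiff ℝ (⊤ : ℕ∞) f.symm := by
  obtain ⟨g, hg, hgf⟩ := hf.2.2.2.2.1
  rw [Set.image_univ, f.surjective.range_eq, contDiffOn_univ] at hg
  have : (f.symm : E n → E n) = g := by
    funext w
    simpa using (hgf (f.symm w) trivial).symm
  rwa [this]

/-- The inverse of a symplectomorphism sends the Hamiltonian vector field of `H` to that of the
pulled back Hamiltonian. -/
theorem XH_pullback {n : ℕ} {f : E n ≃ E n} (hf : IsSymplecto n Set.univ f)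
    {H : ℝ × E n → ℝ} (hH : ContDiff ℝ (⊤ : ℕ∞) H) (t : ℝ) (w : E n) :
    fderiv ℝ f.symm w (XH n H t w) = XH n (fun q => H (q.1, f q.2)) t (f.symm w) := by
  have hd : DifferentiableAt ℝ f (f.symm w) := hf.contDiff.differentiable (by simp) _
  have hds : DifferentiableAt ℝ f.symm w := hf.contDiff_symm.differentiable (by simp) _
  have hinv : ∀ u, fderiv ℝ f (f.symm w) (fderiv ℝ f.symm w u) = u := by
    intro u
    have h1 := hd.hasFDerivAt.comp w hds.hasFDerivAt
    have h2 : (f ∘ f.symm : E n → E n) = id := by funext x; simp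
    rw [h2] at h1
    have h3 := h1.unique (hasFDerivAt_id w)
    simpa using congrArg (fun L => L u) h3
  apply omega0_nondegenerate
  intro v
  rw [← hf.2.2.2.2.2 (f.symm w) trivial, hinv, omega0_XH, omega0_XH]
  have hHd : DifferentiableAt ℝ (fun x => H (t, x)) (f (f.symm w)) :=
    (hH.comp (contDiff_prodMk_right t)).differentiable (by simp) _
  have h4 := (hHd.hasFDerivAt.comp (f.symm w) hd.hasFDerivAt).fderiv
  have h5 : ((fun x => H (t, x)) ∘ f : E n → ℝ) = fun x => H (t, f x) := rfl
  rw [h5] at h4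
  simp [h4]

theorem IsHamFlow.pullback {n : ℕ} {f : E n ≃ E n} (hf : IsSymplecto n Set.univ f)
    {H : ℝ × E n → ℝ} (hH : ContDiff ℝ (⊤ : ℕ∞) H) {Φ : ℝ → E n → E n} (hΦ : IsHamFlow n H Φ) :
    IsHamFlow n (fun q => H (q.1, f q.2)) (fun t z => f.symm (Φ t (f z))) := by
  refine ⟨fun z => by simp [hΦ.1], fun z t => ?_⟩
  rw [← XH_pullback hf hH]
  have hds : DifferentiableAt ℝ f.symm (Φ t (f z)) := hf.contDiff_symm.differentiable (by simp) _
  exact hds.hasFDerivAt.comp_hasDerivAt t (hΦ.2 (f z) t)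

theorem HNorm_pullback {n : ℕ} (f : E n ≃ E n) (H : ℝ × E n → ℝ) :
    HNorm n (fun q => H (q.1, f q.2)) = HNorm n H := by
  unfold HNorm
  have h : ∀ t, (Set.range fun z => H (t, f z)) = Set.range fun z => H (t, z) := fun t =>
    f.surjective.range_comp (fun z => H (t, z))
  simp only [h]

theorem AdmissibleH.pullback {n : ℕ} {f : E n ≃ E n} (hf : IsSymplecto n Set.univ f)
    {W W' : Set (E n)} {H : ℝ × E n → ℝ} (hH : AdmissibleH n W' H)
    (hW : ∀ q ∈ tsupport H, f.symm q.2 ∈ W) :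
    AdmissibleH n W (fun q => H (q.1, f q.2)) := by
  let F : ℝ × E n ≃ₜ ℝ × E n := (Homeomorph.refl ℝ).prodCongr
    { f with
      continuous_toFun := hf.contDiff.continuous
      continuous_invFun := hf.contDiff_symm.continuous }
  have hF : tsupport (fun q => H (q.1, f q.2)) = F ⁻¹' tsupport H :=
    tsupport_comp_eq_preimage H F
  refine ⟨hH.1.comp (contDiff_fst.prodMk (hf.contDiff.comp contDiff_snd)), ?_, ?_⟩
  · rw [hF]
    exact F.isCompact_preimage.2 hH.2.1
  · rw [hF]
    intro q hq
    exact ⟨(hH.2.2 hq).1, by simpa [F] using hW _ hq⟩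

/-! ### The Hofer norm -/

theorem HNorm_nonneg {n : ℕ} {W : Set (E n)} {H : ℝ × E n → ℝ} (hH : AdmissibleH n W H) :
    0 ≤ HNorm n H := by
  refine intervalIntegral.integral_nonneg zero_le_one fun t _ => sub_nonneg.2 ?_
  obtain ⟨C, hC⟩ := hH.1.continuous.bounded_above_of_compact_support hH.2.1
  refine Real.sInf_le_sSup _ ⟨-C, ?_⟩ ⟨C, ?_⟩
  · rintro _ ⟨z, rfl⟩
    exact (abs_le.1 (hC (t, z))).1
  · rintro _ ⟨z, rfl⟩
    exact (abs_le.1 (hC (t, z))).2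

theorem hoferNorm_le {n : ℕ} {W : Set (E n)} {H : ℝ × E n → ℝ} {Φ : ℝ → E n → E n}
    (hH : AdmissibleH n W H) (hΦ : IsHamFlow n H Φ) : hoferNorm n W (Φ 1) ≤ HNorm n H := by
  refine csInf_le ⟨0, ?_⟩ ⟨H, Φ, hH, hΦ, rfl, rfl⟩
  rintro _ ⟨H', _, hH', _, _, rfl⟩
  exact HNorm_nonneg hH'

theorem exists_HNorm_lt {n : ℕ} {W U N : Set (E n)} (h : dispE n W U N = 0) {ε : ℝ}
    (hε : 0 < ε) : ∃ H Φ, AdmissibleH n W H ∧ IsHamFlow n H Φ ∧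
      Φ 1 '' (closure U ∩ W) ∩ N = ∅ ∧ HNorm n H < ε := by
  have h' : dispE n W U N < ENNReal.ofReal ε := by
    rw [h]
    exact ENNReal.ofReal_pos.2 hε
  obtain ⟨_, ⟨φ, ⟨H₀, Φ₀, hH₀, hΦ₀, hφ₀⟩, hdisj, rfl⟩, hlt⟩ := sInf_lt_iff.1 h'
  have hlt' := (ENNReal.ofReal_lt_ofReal_iff hε).1 hlt
  obtain ⟨_, ⟨H, Φ, hH, hΦ, rfl, rfl⟩, hc⟩ :=
    exists_lt_of_csInf_lt (s := {c | ∃ H Φ, AdmissibleH n W H ∧ IsHamFlow n H Φ ∧ φ = Φ 1 ∧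
      c = HNorm n H}) ⟨_, H₀, Φ₀, hH₀, hΦ₀, hφ₀, rfl⟩ hlt'
  exact ⟨H, Φ, hH, hΦ, hdisj, hc⟩

/-! ### Locally uniform convergence and compact sets -/

/-- Locally uniform convergence to a continuous limit is continuous convergence: `F m x → f z`
as `m → ∞` and `x → z` jointly. -/
theorem tendsto_joint {X Y : Type*} [TopologicalSpace X] [UniformSpace Y]
    {F : ℕ → X → Y} {f : X → Y} (h : TendstoLocallyUniformly F f Filter.atTop)
    (hf : Continuous f) (z : X) :
    Filter.Tendsto (fun q : ℕ × X => F q.1 q.2) (Filter.atTop ×ˢ 𝓝 z) (𝓝 (f z)) := by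
  have h' : TendstoLocallyUniformly (fun q : ℕ × X => F q.1) f (Filter.atTop ×ˢ 𝓝 z) := by
    intro u hu x
    obtain ⟨t, ht, hF⟩ := h u hu x
    exact ⟨t, ht, hF.prod_inl _⟩
  exact h'.tendsto_comp hf.continuousAt Filter.tendsto_snd

/-- A continuously convergent sequence whose limit sends a compact set `K` into an open set `O`
eventually sends `K` into `O`. -/
theorem eventually_forall_mem {X Y : Type*} [TopologicalSpace X] [TopologicalSpace Y]
    {F : ℕ → X → Y} {f : X → Y} {K : Set X} {O : Set Y} (hK : IsCompact K) (hO : IsOpen O)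
    (h : ∀ z, Filter.Tendsto (fun q : ℕ × X => F q.1 q.2) (Filter.atTop ×ˢ 𝓝 z) (𝓝 (f z)))
    (hKO : ∀ z ∈ K, f z ∈ O) : ∀ᶠ m in Filter.atTop, ∀ z ∈ K, F m z ∈ O := by
  have hP : ∀ z ∈ K, ∀ᶠ q : ℕ × X in Filter.atTop ×ˢ 𝓝 z, F q.1 q.2 ∈ O :=
    fun z hz => (h z).eventually (hO.mem_nhds (hKO z hz))
  simp only [← Filter.eventually_iSup, ← hK.prod_nhdsSet_eq_biSup] at hP
  exact hP.curry.mono fun _ h => h.self_of_nhdsSet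

/-! ### Transporting a displacement back through the approximating symplectomorphisms -/

/-- If the time-one map of `H` displaces `ψ '' K`, for a compact `K ⊆ W`, from `ψ '' N` in `ψ '' W`,
then some Hamiltonian supported in `W` of the same norm displaces `K` from `N`. -/
theorem exists_pullback_displacing {n : ℕ} {W N K : Set (E n)} (hW : IsOpen W)
    (hN : ClosedIn n W (N ∩ W)) (hK : IsCompact K) (hKW : K ⊆ W)
    {ψ : E n ≃ₜ E n} (hψ : IsSympHomeo n ψ) {H : ℝ × E n → ℝ} {Φ : ℝ → E n → E n}
    (hH : AdmissibleH n (ψ '' W) H) (hΦ : IsHamFlow n H Φ)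
    (hdisj : ∀ z ∈ K, Φ 1 (ψ z) ∉ ψ '' N) :
    ∃ H' Φ', AdmissibleH n W H' ∧ IsHamFlow n H' Φ' ∧ (∀ z ∈ K, Φ' 1 z ∉ N) ∧
      HNorm n H' = HNorm n H := by
  obtain ⟨Ψ, hsymp, hconv, hconv'⟩ := hψ
  have hφ := hΦ.continuous_one hH
  have hlim : ∀ z, Filter.Tendsto (fun q : ℕ × E n => (Ψ q.1).symm (Φ 1 (Ψ q.1 q.2)))
      (Filter.atTop ×ˢ 𝓝 z) (𝓝 (ψ.symm (Φ 1 (ψ z)))) := fun z =>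
    (tendsto_joint hconv' ψ.symm.continuous (Φ 1 (ψ z))).comp
      (Filter.tendsto_fst.prodMk
        ((hφ.tendsto (ψ z)).comp (tendsto_joint hconv ψ.continuous z)))
  -- The open set `W \ closure (N ∩ W)` is `W \ N`, because `N ∩ W` is closed in `W`.
  have hev1 : ∀ᶠ m in Filter.atTop, ∀ z ∈ K,
      (Ψ m).symm (Φ 1 (Ψ m z)) ∈ W \ closure (N ∩ W) := by
    refine eventually_forall_mem (F := fun m z => (Ψ m).symm (Φ 1 (Ψ m z))) hK
      (hW.sdiff isClosed_closure) hlim fun z hz => ?_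
    obtain ⟨w, hw, hwz⟩ := hΦ.mapsTo_one hH (Set.mem_image_of_mem ψ (hKW hz))
    rw [← hwz, ψ.symm_apply_apply]
    refine ⟨hw, fun hcl => hdisj z hz ?_⟩
    rw [← hwz]
    exact Set.mem_image_of_mem ψ (hN.2 ⟨hcl, hw⟩).1
  have hev2 : ∀ᶠ m in Filter.atTop, ∀ w ∈ Prod.snd '' tsupport H, (Ψ m).symm w ∈ W := by
    refine eventually_forall_mem (F := fun m w => (Ψ m).symm w) (hH.2.1.image continuous_snd) hW
      (tendsto_joint hconv' ψ.symm.continuous) ?_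
    rintro _ ⟨q, hq, rfl⟩
    obtain ⟨w, hw, hwq⟩ := (hH.2.2 hq).2
    rwa [← hwq, ψ.symm_apply_apply]
  obtain ⟨m, hm1, hm2⟩ := (hev1.and hev2).exists
  refine ⟨_, _, hH.pullback (hsymp m) fun q hq => hm2 _ (Set.mem_image_of_mem _ hq),
    hΦ.pullback (hsymp m) hH.1, fun z hz hzN => ?_, HNorm_pullback (Ψ m) H⟩
  exact (hm1 z hz).2 (subset_closure ⟨hzN, (hm1 z hz).1⟩)

/-- invariance of local rigidity under symplectic homeomorphisms. -/
theorem locRigid_invariant_under_symplectic_homeo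
    (n : ℕ) (hn : 1 ≤ n) (N : Set (E n)) (hN : LocallyClosedSet n N)
    (p : E n) (hp : p ∈ N) (hrig : LocRigid n N p)
    (ψ : E n ≃ₜ E n) (hψ : IsSympHomeo n ψ) :
    LocRigid n (⇑ψ '' N) (ψ p) := by
  obtain ⟨W, hW, hpW, hcl, hR⟩ := hrig
  refine ⟨ψ '' W, ψ.isOpenMap W hW, Set.mem_image_of_mem ψ hpW, ⟨Set.inter_subset_right, ?_⟩, ?_⟩
  · rw [← Set.image_inter ψ.injective, ← ψ.image_closure, ← Set.image_inter ψ.injective]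
    exact Set.image_mono hcl.2
  intro U' hU' hpU' _
  obtain ⟨U, hU, hpU, hUsub, hUc⟩ := exists_open_between_and_isCompact_closure
    (isCompact_singleton (x := p)) (hW.inter (hU'.preimage ψ.continuous))
    (Set.singleton_subset_iff.2 ⟨hpW, hpU'⟩)
  have hUW : closure U ⊆ W := fun z hz => (hUsub hz).1
  refine pos_iff_ne_zero.2 fun h0 => ?_
  refine (hR U hU (hpU rfl) (subset_closure.trans hUW)).ne' (nonpos_iff_eq_zero.1 ?_)
  refine le_of_forall_pos_le_add fun ε hε => ?_
  rw [zero_add]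
  rcases eq_or_ne ε ⊤ with rfl | hεt
  · exact le_top
  obtain ⟨H, Φ, hH, hΦ, hdisj, hlt⟩ := exists_HNorm_lt h0 (ENNReal.toReal_pos hε.ne' hεt)
  have hdisj' : ∀ z ∈ closure U, Φ 1 (ψ z) ∉ ψ '' N := by
    intro z hz hzN
    have hzW := Set.mem_image_of_mem ψ (hUW hz)
    have : Φ 1 (ψ z) ∈ Φ 1 '' (closure U' ∩ ψ '' W) ∩ (ψ '' N ∩ ψ '' W) :=
      ⟨⟨ψ z, ⟨subset_closure (hUsub hz).2, hzW⟩, rfl⟩, hzN, hΦ.mapsTo_one hH hzW⟩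
    rw [hdisj] at this
    exact this
  obtain ⟨H', Φ', hH', hΦ', hd, hnorm⟩ :=
    exists_pullback_displacing hW hcl hUc hUW hψ hH hΦ hdisj'
  calc dispE n W U (N ∩ W) ≤ ENNReal.ofReal (hoferNorm n W (Φ' 1)) := by
        refine sInf_le ⟨Φ' 1, ⟨H', Φ', hH', hΦ', rfl⟩, ?_, rfl⟩
        refine Set.eq_empty_of_forall_notMem ?_
        rintro _ ⟨⟨z, hz, rfl⟩, hzN⟩
        exact hd z hz.1 hzN.1
    _ ≤ ENNReal.ofReal ε.toReal :=
        ENNReal.ofReal_le_ofReal ((hoferNorm_le hH' hΦ').trans (hnorm.trans_lt hlt).le)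
    _ = ε := ENNReal.ofReal_toReal hεt
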